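/- Let D = B_R(0) and X = B_r(0) be concentric balls of radii r ≪ R in n-dimensional Euclidean space, and define the normalized traffic load λ_t(X) = (1/vol(D)²) ∫∫_{D×D} length(X ∩ [s,t]) ds dt, where [s,t] is the straight segment from s to t. Then there exist constants 0 < c ≤ C depending only on n such that c·r^n/R^{n-1} ≤ λ_t(B_r(0)) ≤ C·r^n/R^{n-1} for all 0 < r ≤ R/2 and R ≥ 1. -/

import Mathlib

open MeasureTheory

namespace Stmt8Aux

/-- The integrand after parametrizing the segment. -/
noncomputable def ker (n : ℕ) (r : ℝ) (u : ℝ) (s t : EuclideanSpace ℝ (Fin n)) : ENNReal :=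
  ENNReal.ofReal (dist s t) *
    (Metric.ball (0 : EuclideanSpace ℝ (Fin n)) r).indicator (fun _ => 1) ((1 - u) • s + u • t)

lemma measurable_ker (n : ℕ) (r : ℝ) :
    Measurable (fun p : (EuclideanSpace ℝ (Fin n) × EuclideanSpace ℝ (Fin n)) × ℝ =>
      ker n r p.2 p.1.1 p.1.2) := by
  unfold ker
  refine Measurable.mul ?_ ?_
  · fun_prop
  · refine (measurable_const.indicator Metric.isOpen_ball.measurableSet).comp
      (Continuous.measurable ?_)
    fun_prop

lemma length_eq (n : ℕ) (r : ℝ) (s t : EuclideanSpace ℝ (Fin n)) :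
    μH[1] (segment ℝ s t ∩ Metric.ball 0 r) = ∫⁻ u in Set.Icc (0 : ℝ) 1, ker n r u s t := by
  have hcont : Continuous (fun u : ℝ => (1 - u) • s + u • t) := by fun_prop
  have hm : MeasurableSet ((fun u : ℝ => (1 - u) • s + u • t) ⁻¹' Metric.ball 0 r) :=
    hcont.measurable Metric.isOpen_ball.measurableSet
  have h1 : segment ℝ s t ∩ Metric.ball 0 r = AffineMap.lineMap s t ''
      (((fun u : ℝ => (1 - u) • s + u • t) ⁻¹' Metric.ball 0 r) ∩ Set.Icc (0 : ℝ) 1) := by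
    rw [segment_eq_image_lineMap]
    ext x
    constructor
    · rintro ⟨⟨u, hu, rfl⟩, hx⟩
      refine ⟨u, ⟨?_, hu⟩, rfl⟩
      simpa [AffineMap.lineMap_apply_module] using hx
    · rintro ⟨u, ⟨hx, hu⟩, rfl⟩
      refine ⟨⟨u, hu, rfl⟩, ?_⟩
      simpa [AffineMap.lineMap_apply_module] using hx
  rw [h1, hausdorffMeasure_lineMap_image, hausdorffMeasure_real]
  unfold ker
  rw [lintegral_const_mul']
  · have : (fun u : ℝ => (Metric.ball (0 : EuclideanSpace ℝ (Fin n)) r).indicator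
        (fun _ => (1 : ENNReal)) ((1 - u) • s + u • t)) =
        ((fun u : ℝ => (1 - u) • s + u • t) ⁻¹' Metric.ball 0 r).indicator 1 := by
      ext u; rfl
    rw [this, lintegral_indicator_one hm, Measure.restrict_apply hm, ← edist_dist, edist_nndist]
    rfl
  · exact ENNReal.ofReal_ne_top

lemma swap (n : ℕ) (r : ℝ) (B : Set (EuclideanSpace ℝ (Fin n))) :
    ∫⁻ s in B, ∫⁻ t in B, ∫⁻ u in Set.Icc (0 : ℝ) 1, ker n r u s t =
    ∫⁻ u in Set.Icc (0 : ℝ) 1, ∫⁻ s in B, ∫⁻ t in B, ker n r u s t := by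
  have h := measurable_ker n r
  have h1 : ∀ s, ∫⁻ t in B, ∫⁻ u in Set.Icc (0 : ℝ) 1, ker n r u s t =
      ∫⁻ u in Set.Icc (0 : ℝ) 1, ∫⁻ t in B, ker n r u s t := by
    intro s
    rw [lintegral_lintegral_swap]
    exact (h.comp (f := fun p : EuclideanSpace ℝ (Fin n) × ℝ => ((s, p.1), p.2))
      (by fun_prop)).aemeasurable
  simp_rw [h1]
  rw [lintegral_lintegral_swap]
  refine Measurable.aemeasurable ?_
  exact Measurable.lintegral_prod_right' (h.comp
    (f := fun p : (EuclideanSpace ℝ (Fin n) × ℝ) × EuclideanSpace ℝ (Fin n) =>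
      ((p.1.1, p.2), p.1.2)) (by fun_prop))

lemma integral_eq (n : ℕ) (R r : ℝ) :
    (∫ s in Metric.ball (0 : EuclideanSpace ℝ (Fin n)) R,
      ∫ t in Metric.ball (0 : EuclideanSpace ℝ (Fin n)) R,
        (μH[1] (segment ℝ s t ∩ Metric.ball 0 r)).toReal) =
    (∫⁻ u in Set.Icc (0 : ℝ) 1, ∫⁻ s in Metric.ball (0 : EuclideanSpace ℝ (Fin n)) R,
      ∫⁻ t in Metric.ball (0 : EuclideanSpace ℝ (Fin n)) R, ker n r u s t).toReal := by
  have hm : Measurable (fun p : EuclideanSpace ℝ (Fin n) × EuclideanSpace ℝ (Fin n) =>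
      ∫⁻ u in Set.Icc (0 : ℝ) 1, ker n r u p.1 p.2) :=
    Measurable.lintegral_prod_right' (measurable_ker n r)
  have hb : ∀ s t, ∫⁻ u in Set.Icc (0 : ℝ) 1, ker n r u s t ≤ ENNReal.ofReal (dist s t) := by
    intro s t
    calc _ ≤ ∫⁻ u in Set.Icc (0 : ℝ) 1, ENNReal.ofReal (dist s t) := by
          refine lintegral_mono fun u => ?_
          unfold ker
          refine mul_le_of_le_one_right' ?_
          exact Set.indicator_le_self' (fun _ _ => zero_le) _
      _ = _ := by simp
  rw [← swap]
  simp_rw [length_eq]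
  rw [← integral_toReal]
  · refine integral_congr_ae (Filter.Eventually.of_forall fun s => ?_)
    refine integral_toReal ?_ ?_
    · exact (hm.comp measurable_prodMk_left).aemeasurable
    · exact Filter.Eventually.of_forall fun t => (hb s t).trans_lt ENNReal.ofReal_lt_top
  · exact hm.lintegral_prod_right'.aemeasurable
  · refine (ae_restrict_iff' Metric.isOpen_ball.measurableSet).2
      (Filter.Eventually.of_forall fun s hs => ?_)
    calc _ ≤ ∫⁻ t in Metric.ball (0 : EuclideanSpace ℝ (Fin n)) R, ENNReal.ofReal (R + R) := by
          refine setLIntegral_mono' Metric.isOpen_ball.measurableSet fun t ht => (hb s t).trans ?_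
          refine ENNReal.ofReal_le_ofReal ?_
          have := dist_triangle_right s t 0
          simp only [Metric.mem_ball] at hs ht
          linarith
      _ < ⊤ := by
          rw [setLIntegral_const]
          exact ENNReal.mul_lt_top ENNReal.ofReal_lt_top measure_ball_lt_top

lemma slice_upper (n : ℕ) (r a : ℝ) (ha : 1 / 2 ≤ a) (w : EuclideanSpace ℝ (Fin n)) :
    volume {x : EuclideanSpace ℝ (Fin n) | a • x + w ∈ Metric.ball 0 r} ≤
      volume (Metric.ball (0 : EuclideanSpace ℝ (Fin n)) (2 * r)) := by
  have ha0 : 0 < a := by linarith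
  rw [← Measure.addHaar_ball_center volume (-(a⁻¹ • w)) (2 * r)]
  refine measure_mono fun x hx => ?_
  simp only [Set.mem_ofPred_eq, mem_ball_zero_iff] at hx
  rw [mem_ball_iff_norm, sub_neg_eq_add]
  have : a • x + w = a • (x + a⁻¹ • w) := by
    rw [smul_add, smul_smul, mul_inv_cancel₀ ha0.ne', one_smul]
  rw [this, norm_smul, Real.norm_of_nonneg ha0.le] at hx
  nlinarith [norm_nonneg (x + a⁻¹ • w)]

lemma H_upper (n : ℕ) (R r u : ℝ) :
    ∫⁻ s in Metric.ball (0 : EuclideanSpace ℝ (Fin n)) R,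
      ∫⁻ t in Metric.ball (0 : EuclideanSpace ℝ (Fin n)) R, ker n r u s t ≤
    ENNReal.ofReal (2 * R) * volume (Metric.ball (0 : EuclideanSpace ℝ (Fin n)) (2 * r)) *
      volume (Metric.ball (0 : EuclideanSpace ℝ (Fin n)) R) := by
  set B := Metric.ball (0 : EuclideanSpace ℝ (Fin n)) R with hB
  have hBm : MeasurableSet B := Metric.isOpen_ball.measurableSet
  set S : Set (EuclideanSpace ℝ (Fin n) × EuclideanSpace ℝ (Fin n)) :=
    (fun p => (1 - u) • p.1 + u • p.2) ⁻¹' Metric.ball 0 r with hS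
  have hc : Continuous (fun p : EuclideanSpace ℝ (Fin n) × EuclideanSpace ℝ (Fin n) =>
    (1 - u) • p.1 + u • p.2) := by fun_prop
  have hSm : MeasurableSet S := hc.measurable Metric.isOpen_ball.measurableSet
  have hI : Measurable (S.indicator (fun _ => (1 : ENNReal))) := measurable_const.indicator hSm
  have h1 : ∫⁻ s in B, ∫⁻ t in B, ker n r u s t ≤
      ∫⁻ s in B, ∫⁻ t in B, ENNReal.ofReal (2 * R) * S.indicator (fun _ => 1) (s, t) := by
    refine setLIntegral_mono' hBm fun s hs => setLIntegral_mono' hBm fun t ht => ?_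
    unfold ker
    refine mul_le_mul' (ENNReal.ofReal_le_ofReal ?_) le_rfl
    have := dist_triangle_right s t 0
    simp only [hB, Metric.mem_ball] at hs ht
    linarith
  have hr : ∀ x, Measurable (fun t => S.indicator (fun _ => (1 : ENNReal)) (x, t)) :=
    fun x => hI.comp measurable_prodMk_left
  have hl : ∀ x, Measurable (fun t => S.indicator (fun _ => (1 : ENNReal)) (t, x)) :=
    fun x => hI.comp measurable_prodMk_right
  have h2 : ∫⁻ s in B, ∫⁻ t in B, ENNReal.ofReal (2 * R) * S.indicator (fun _ => 1) (s, t) =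
      ENNReal.ofReal (2 * R) * ∫⁻ s in B, ∫⁻ t in B, S.indicator (fun _ => 1) (s, t) := by
    simp_rw [lintegral_const_mul' _ _ ENNReal.ofReal_ne_top]
  have h3 : ∫⁻ s in B, ∫⁻ t in B, S.indicator (fun _ => 1) (s, t) ≤
      volume (Metric.ball (0 : EuclideanSpace ℝ (Fin n)) (2 * r)) * volume B := by
    rcases le_total (1 / 2) u with hu | hu
    · rw [← setLIntegral_const]
      refine lintegral_mono fun s => (setLIntegral_le_lintegral _ _).trans ?_
      refine le_trans (le_of_eq ?_) (slice_upper n r u hu ((1 - u) • s))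
      rw [← lintegral_indicator_one]
      · congr 1; ext t
        simp [Set.indicator, hS, add_comm]
      · exact (Continuous.measurable (by fun_prop)) Metric.isOpen_ball.measurableSet
    · rw [lintegral_lintegral_swap (f := fun s t => S.indicator (fun _ => (1 : ENNReal)) (s, t))
        hI.aemeasurable, ← setLIntegral_const]
      refine lintegral_mono fun t => (setLIntegral_le_lintegral _ _).trans ?_
      refine le_trans (le_of_eq ?_) (slice_upper n r (1 - u) (by linarith) (u • t))
      rw [← lintegral_indicator_one]
      · congr 1
      · exact (Continuous.measurable (by fun_prop)) Metric.isOpen_ball.measurableSet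
  refine h1.trans ?_
  rw [h2, mul_assoc]
  exact mul_le_mul' le_rfl h3

lemma H_lower (n : ℕ) (R r u : ℝ) (hr0 : 0 < r) (hr : r ≤ R / 2) (hu : 2 / 3 ≤ u)
    (hu1 : u ≤ 1) :
    ENNReal.ofReal (R / 4) * volume (Metric.ball (0 : EuclideanSpace ℝ (Fin n)) r) *
      volume (Metric.ball (0 : EuclideanSpace ℝ (Fin n)) R \ Metric.ball 0 (3 / 4 * R)) ≤
    ∫⁻ s in Metric.ball (0 : EuclideanSpace ℝ (Fin n)) R,
      ∫⁻ t in Metric.ball (0 : EuclideanSpace ℝ (Fin n)) R, ker n r u s t := by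
  have hu0 : 0 < u := by linarith
  rw [← setLIntegral_const]
  refine le_trans ?_ (lintegral_mono_set (Set.sdiff_subset (t := Metric.ball 0 (3 / 4 * R))))
  refine setLIntegral_mono' (Metric.isOpen_ball.measurableSet.diff
    Metric.isOpen_ball.measurableSet) fun s hs => ?_
  simp only [Set.mem_sdiff, mem_ball_zero_iff, not_lt] at hs
  obtain ⟨hs1, hs2⟩ := hs
  set a : EuclideanSpace ℝ (Fin n) := -((u⁻¹ * (1 - u)) • s) with ha
  have hui : u⁻¹ * (1 - u) ≤ 1 / 2 := by
    rw [inv_mul_le_iff₀ hu0]; linarith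
  have hui0 : 0 ≤ u⁻¹ * (1 - u) := mul_nonneg (inv_nonneg.2 hu0.le) (by linarith)
  have han : ‖a‖ ≤ R / 2 := by
    rw [ha, norm_neg, norm_smul, Real.norm_of_nonneg hui0]
    nlinarith [norm_nonneg s]
  rw [← Measure.addHaar_ball_center volume a r, ← setLIntegral_const]
  have hsub : Metric.ball a r ⊆ Metric.ball 0 R := by
    refine Metric.ball_subset_ball' ?_
    rw [dist_zero_right]; linarith
  refine le_trans ?_ (lintegral_mono_set hsub)
  refine setLIntegral_mono' Metric.isOpen_ball.measurableSet fun t ht => ?_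
  have hx : ‖(1 - u) • s + u • t‖ < r := by
    have e : (1 - u) • s + u • t = u • (t - a) := by
      rw [ha, sub_neg_eq_add, smul_add, smul_smul, mul_inv_cancel_left₀ hu0.ne', add_comm]
    rw [mem_ball_iff_norm] at ht
    rw [e, norm_smul, Real.norm_of_nonneg hu0.le]
    nlinarith [norm_nonneg (t - a)]
  unfold ker
  rw [Set.indicator_of_mem (by rwa [mem_ball_zero_iff]), mul_one]
  refine ENNReal.ofReal_le_ofReal ?_
  have e : ((1 - u) • s + u • t) - s = u • (t - s) := by
    rw [smul_sub, sub_smul, one_smul]; abel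
  have h1 : ‖((1 - u) • s + u • t) - s‖ = u * dist s t := by
    rw [e, norm_smul, Real.norm_of_nonneg hu0.le, dist_comm, dist_eq_norm]
  have h2 := norm_sub_norm_le s ((1 - u) • s + u • t)
  rw [norm_sub_rev, h1] at h2
  nlinarith [dist_nonneg (x := s) (y := t)]

end Stmt8Aux

/- STATEMENT 8: in n-dimensional Euclidean space, with
   λ_t(B_r(0)) = (1/vol(B_R(0))²) ∫∫_{B_R×B_R} length([s,t] ∩ B_r(0)) ds dt
   (length = 1-dimensional Hausdorff measure of the straight segment ∩ ball),
   there are constants 0 < c ≤ C depending only on n with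
   c·rⁿ/R^{n-1} ≤ λ_t(B_r(0)) ≤ C·rⁿ/R^{n-1} for all 0 < r ≤ R/2, R ≥ 1. -/
theorem stmt8 (n : ℕ) (hn : 1 ≤ n) :
    ∃ c C : ℝ, 0 < c ∧ c ≤ C ∧
      ∀ R r : ℝ, 1 ≤ R → 0 < r → r ≤ R / 2 →
        ∀ lam : ℝ,
          lam = (∫ s in Metric.ball (0 : EuclideanSpace ℝ (Fin n)) R,
                  ∫ t in Metric.ball (0 : EuclideanSpace ℝ (Fin n)) R,
                    (μH[1] (segment ℝ s t ∩ Metric.ball 0 r)).toReal) /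
                (volume (Metric.ball (0 : EuclideanSpace ℝ (Fin n)) R)).toReal ^ 2 →
          c * r ^ n / R ^ (n - 1) ≤ lam ∧ lam ≤ C * r ^ n / R ^ (n - 1) := by
  have hpow : (3 / 4 : ℝ) ^ n ≤ 3 / 4 := by
    simpa using pow_le_pow_of_le_one (by norm_num : (0 : ℝ) ≤ 3 / 4) (by norm_num) hn
  refine ⟨1 / 48, 2 * 2 ^ n, by norm_num, ?_, ?_⟩
  · have : (1 : ℝ) ≤ 2 ^ n := one_le_pow₀ (by norm_num)
    linarith
  intro R r hR hr hrR lam hlam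
  have hR0 : 0 < R := by linarith
  rw [Stmt8Aux.integral_eq] at hlam
  set I := ∫⁻ u in Set.Icc (0 : ℝ) 1, ∫⁻ s in Metric.ball (0 : EuclideanSpace ℝ (Fin n)) R,
      ∫⁻ t in Metric.ball (0 : EuclideanSpace ℝ (Fin n)) R, Stmt8Aux.ker n r u s t with hI
  set v := (volume (Metric.ball (0 : EuclideanSpace ℝ (Fin n)) 1)).toReal with hv
  have hv0 : 0 < v := ENNReal.toReal_pos (Metric.measure_ball_pos _ _ one_pos).ne'
    measure_ball_lt_top.ne
  have hvol : ∀ ρ : ℝ, 0 ≤ ρ →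
      (volume (Metric.ball (0 : EuclideanSpace ℝ (Fin n)) ρ)).toReal = ρ ^ n * v := by
    intro ρ hρ
    have : Nonempty (Fin n) := ⟨⟨0, hn⟩⟩
    have : Nontrivial (EuclideanSpace ℝ (Fin n)) := inferInstance
    rw [Measure.addHaar_ball volume _ hρ, ENNReal.toReal_mul,
      ENNReal.toReal_ofReal (by positivity)]
    simp [hv]
  have hup : I ≤ ENNReal.ofReal (2 * R) *
      volume (Metric.ball (0 : EuclideanSpace ℝ (Fin n)) (2 * r)) *
      volume (Metric.ball (0 : EuclideanSpace ℝ (Fin n)) R) := by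
    refine (lintegral_mono fun u => Stmt8Aux.H_upper n R r u).trans ?_
    simp
  have hupt : ENNReal.ofReal (2 * R) *
      volume (Metric.ball (0 : EuclideanSpace ℝ (Fin n)) (2 * r)) *
      volume (Metric.ball (0 : EuclideanSpace ℝ (Fin n)) R) ≠ ⊤ :=
    ENNReal.mul_ne_top (ENNReal.mul_ne_top ENNReal.ofReal_ne_top measure_ball_lt_top.ne)
      measure_ball_lt_top.ne
  have hIt : I ≠ ⊤ := ne_top_of_le_ne_top hupt hup
  have hlo : ENNReal.ofReal (R / 4) * volume (Metric.ball (0 : EuclideanSpace ℝ (Fin n)) r) *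
      volume (Metric.ball (0 : EuclideanSpace ℝ (Fin n)) R \ Metric.ball 0 (3 / 4 * R)) *
      ENNReal.ofReal (1 / 3) ≤ I := by
    have e : ENNReal.ofReal (1 / 3) = volume (Set.Icc (2 / 3 : ℝ) 1) := by
      rw [Real.volume_Icc]; norm_num
    rw [e, ← setLIntegral_const]
    refine le_trans ?_ (lintegral_mono_set (Set.Icc_subset_Icc_left (by norm_num : (0 : ℝ) ≤ 2 / 3)))
    exact setLIntegral_mono' measurableSet_Icc fun u hu =>
      Stmt8Aux.H_lower n R r u hr hrR hu.1 hu.2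
  have hdiff : (volume (Metric.ball (0 : EuclideanSpace ℝ (Fin n)) R \
      Metric.ball 0 (3 / 4 * R))).toReal = R ^ n * v - (3 / 4 * R) ^ n * v := by
    have hs : Metric.ball (0 : EuclideanSpace ℝ (Fin n)) (3 / 4 * R) ⊆ Metric.ball 0 R :=
      Metric.ball_subset_ball (by linarith)
    rw [measure_sdiff hs Metric.isOpen_ball.measurableSet.nullMeasurableSet
      measure_ball_lt_top.ne, ENNReal.toReal_sub_of_le (measure_mono hs) measure_ball_lt_top.ne,
      hvol _ hR0.le, hvol _ (by positivity)]
  have hup' := ENNReal.toReal_mono hupt hup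
  have hlo' := ENNReal.toReal_mono hIt hlo
  rw [ENNReal.toReal_mul, ENNReal.toReal_mul, ENNReal.toReal_ofReal (by positivity),
    hvol _ (by positivity), hvol _ hR0.le] at hup'
  rw [ENNReal.toReal_mul, ENNReal.toReal_mul, ENNReal.toReal_mul,
    ENNReal.toReal_ofReal (by positivity), ENNReal.toReal_ofReal (by positivity),
    hvol _ hr.le, hdiff] at hlo'
  rw [hvol _ hR0.le] at hlam
  have hRn : R ^ n = R ^ (n - 1) * R := by
    rw [← pow_succ, Nat.sub_add_cancel hn]
  have hRp : 0 < R ^ (n - 1) := by positivity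
  have hrp : 0 < r ^ n := by positivity
  rw [mul_pow] at hup' hlo'
  rw [hlam]
  constructor
  · rw [div_le_div_iff₀ hRp (by positivity)]
    have h1 : R / 4 * (r ^ n * v) * (R ^ n * v / 4) * (1 / 3) ≤ I.toReal := by
      refine le_trans ?_ hlo'
      have : R ^ n * v / 4 ≤ R ^ n * v - (3 / 4) ^ n * R ^ n * v := by
        have : 0 < R ^ n * v := by positivity
        nlinarith
      gcongr
    calc _ = R / 4 * (r ^ n * v) * (R ^ n * v / 4) * (1 / 3) * R ^ (n - 1) := by
          rw [hRn]; ring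
      _ ≤ _ := by gcongr
  · rw [div_le_div_iff₀ (by positivity) hRp]
    calc _ ≤ 2 * R * (2 ^ n * r ^ n * v) * (R ^ n * v) * R ^ (n - 1) := by gcongr
      _ = _ := by rw [hRn]; ring
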